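/- Fix integers m ≥ 0 and k ≥ 0. Then N_{m,k}(α,β) = α^k β^m Σ_{m'=0}^{m} Σ_{k'=0}^{k} α^{−k'} β^{−m'} N'_{m',k'}(α,β), i.e. N_{m,k}(α,β) = Σ_{m'=0}^{m} Σ_{k'=0}^{k} α^{k−k'} β^{m−m'} N'_{m',k'}(α,β), where by convention N'_{0,0}(α,β) = 1 and N'_{m',k'}(α,β) = 0 if exactly one of m', k' is zero. The identity holds in ℤ[α,β]. -/

import Mathlib

open scoped Classical
open Finset

/-- A Condensed Catalan tableau with `k` rows inside a rectangle of width `w`,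
of shape `lam`: cells are `none` (empty), `some true` (an α) or `some false` (a β). -/
def IsCCT (k w : ℕ) (lam : Fin k → ℕ) (F : Fin k → Fin w → Option Bool) : Prop :=
  (∀ (i : Fin k) (c : Fin w), lam i ≤ (c : ℕ) → F i c = none) ∧
  (∀ (i : Fin k) (c c' : Fin w), F i c = some false → c' < c → F i c' = none) ∧
  (∀ (i i' : Fin k) (c : Fin w), F i c = some true → i' < i → F i' c = none) ∧
  (∀ (i : Fin k) (c : Fin w), (c : ℕ) < lam i →
    (∀ i' : Fin k, i < i' → F i' c ≠ some true) →
    (∀ c' : Fin w, c < c' → (c' : ℕ) < lam i → F i c' ≠ some false) →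
    F i c ≠ none)

/-- The number of α's in the filling. -/
def aCount (k w : ℕ) (F : Fin k → Fin w → Option Bool) : ℕ :=
  (Finset.univ.filter fun p : Fin k × Fin w => F p.1 p.2 = some true).card

/-- The number of β's in the filling. -/
def bCount (k w : ℕ) (F : Fin k → Fin w → Option Bool) : ℕ :=
  (Finset.univ.filter fun p : Fin k × Fin w => F p.1 p.2 = some false).card

/-- The binomial coefficient `binom a b` for integer arguments, with the convention
that it vanishes whenever `b < 0` or `b > a`. -/
def icho (a b : ℤ) : ℤ := if 0 ≤ b ∧ b ≤ a then ((a.toNat).choose b.toNat : ℤ) else 0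

/-- `N_{m,k}(α,β)`: the sum of weights of all Condensed Catalan tableaux of size
`(k, k+m)` (shape contained in the `k × m` rectangle), with `α = X 0`, `β = X 1`. -/
noncomputable def Ntab (m k : ℕ) : MvPolynomial (Fin 2) ℤ :=
  ∑ pr ∈ Finset.univ.filter
      (fun pr : (Fin k → Fin (m + 1)) × (Fin k → Fin m → Option Bool) =>
        (∀ i j : Fin k, i ≤ j → (pr.1 j : ℕ) ≤ (pr.1 i : ℕ)) ∧
        IsCCT k m (fun i => (pr.1 i : ℕ)) pr.2),
    (MvPolynomial.X 0 : MvPolynomial (Fin 2) ℤ) ^ (k + aCount k m pr.2) *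
      MvPolynomial.X 1 ^ (m + bCount k m pr.2)

/-- `N'_{m,k}(α,β)`: the sum of weights of Condensed Catalan tableaux of size
`(k, k+m)` whose shape has first row exactly `m` and exactly `k` nonzero rows, with
the conventions `N'_{0,0} = 1` and `N'_{m,k} = 0` when exactly one of `m, k` is
zero. -/
noncomputable def N'tab (m k : ℕ) : MvPolynomial (Fin 2) ℤ :=
  if m = 0 ∧ k = 0 then 1
  else if m = 0 ∨ k = 0 then 0
  else
    ∑ pr ∈ Finset.univ.filter
        (fun pr : (Fin k → Fin (m + 1)) × (Fin k → Fin m → Option Bool) =>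
          (∀ i j : Fin k, i ≤ j → (pr.1 j : ℕ) ≤ (pr.1 i : ℕ)) ∧
          (∀ h : 0 < k, (pr.1 ⟨0, h⟩ : ℕ) = m) ∧
          (∀ i : Fin k, 1 ≤ (pr.1 i : ℕ)) ∧
          IsCCT k m (fun i => (pr.1 i : ℕ)) pr.2),
      (MvPolynomial.X 0 : MvPolynomial (Fin 2) ℤ) ^ (k + aCount k m pr.2) *
        MvPolynomial.X 1 ^ (m + bCount k m pr.2)

def RR (k m' k' : ℕ) (lam : Fin k → ℕ) : Prop :=
  (∀ i j : Fin k, i ≤ j → lam j ≤ lam i) ∧ (∀ i, lam i ≤ m') ∧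
  (m' = 0 ∨ ∃ i, lam i = m') ∧ (∀ i : Fin k, 1 ≤ lam i ↔ (i : ℕ) < k')

noncomputable def SS (m k m' k' : ℕ) :
    Finset ((Fin k → Fin (m + 1)) × (Fin k → Fin m → Option Bool)) :=
  Finset.univ.filter (fun pr => RR k m' k' (fun i => (pr.1 i : ℕ)) ∧
    IsCCT k m (fun i => (pr.1 i : ℕ)) pr.2)

lemma mem_SS (m k m' k' : ℕ) (pr : (Fin k → Fin (m + 1)) × (Fin k → Fin m → Option Bool)) :
    pr ∈ SS m k m' k' ↔ RR k m' k' (fun i => (pr.1 i : ℕ)) ∧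
    IsCCT k m (fun i => (pr.1 i : ℕ)) pr.2 := by
  unfold SS
  rw [Finset.mem_filter]
  simp

lemma N'tab_eq (m k : ℕ) : N'tab m k = ∑ pr ∈ SS m k m k,
    (MvPolynomial.X 0 : MvPolynomial (Fin 2) ℤ) ^ (k + aCount k m pr.2) *
        MvPolynomial.X 1 ^ (m + bCount k m pr.2) := by
  unfold N'tab
  split_ifs with h1 h2
  · obtain ⟨rfl, rfl⟩ := h1
    have : SS 0 0 0 0 = Finset.univ := by
      ext pr
      simp [SS, RR, IsCCT]
    rw [this]
    simp [aCount, bCount]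
  · have : SS m k m k = ∅ := by
      apply Finset.eq_empty_of_forall_notMem
      intro pr hpr
      rw [mem_SS] at hpr
      obtain ⟨⟨h3, h4, h5, h6⟩, -⟩ := hpr
      rcases Nat.eq_zero_or_pos k with hk | hk
      · subst hk
        rcases h5 with h5 | ⟨i, -⟩
        · exact h1 ⟨h5, rfl⟩
        · exact i.elim0
      · have := (h6 ⟨0, hk⟩).2 hk
        have := h4 ⟨0, hk⟩
        omega
    rw [this]; simp
  · apply Finset.sum_congr _ (fun _ _ => rfl)
    ext pr
    have hk : 0 < k := by omega
    rw [mem_SS, Finset.mem_filter]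
    simp only [RR, Finset.mem_univ, true_and]
    constructor
    · rintro ⟨ha, hb, hc, hd⟩
      exact ⟨⟨ha, fun i => by have := (pr.1 i).2; omega, Or.inr ⟨⟨0, hk⟩, hb hk⟩,
        fun i => ⟨fun _ => i.2, fun _ => hc i⟩⟩, hd⟩
    · rintro ⟨⟨ha, hb, hc, he⟩, hd⟩
      refine ⟨ha, fun h => ?_, fun i => (he i).2 i.2, hd⟩
      rcases hc with hc | ⟨i, hi⟩
      · omega
      · have h1 := ha ⟨0, hk⟩ i (Nat.zero_le _)
        have h2 := hb ⟨0, hk⟩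
        omega

def padL (m k m' k' : ℕ) (hm : m' ≤ m) (l : Fin k' → Fin (m' + 1)) : Fin k → Fin (m + 1) :=
  fun i => if h : (i : ℕ) < k' then ⟨l ⟨i, h⟩, by have := (l ⟨i, h⟩).2; omega⟩ else ⟨0, by omega⟩

def padF (m k m' k' : ℕ) (F : Fin k' → Fin m' → Option Bool) : Fin k → Fin m → Option Bool :=
  fun i c => if h : (i : ℕ) < k' ∧ (c : ℕ) < m' then F ⟨i, h.1⟩ ⟨c, h.2⟩ else none

def resL (m k m' k' : ℕ) (hk : k' ≤ k) (l : Fin k → Fin (m + 1)) : Fin k' → Fin (m' + 1) :=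
  fun i => ⟨min (l ⟨i, by have := i.2; omega⟩) m', by omega⟩

def resF (m k m' k' : ℕ) (hm : m' ≤ m) (hk : k' ≤ k) (F : Fin k → Fin m → Option Bool) :
    Fin k' → Fin m' → Option Bool :=
  fun i c => F ⟨i, by have := i.2; omega⟩ ⟨c, by have := c.2; omega⟩

lemma card_pad (m k m' k' : ℕ) (hm : m' ≤ m) (hk : k' ≤ k)
    (F : Fin k' → Fin m' → Option Bool) (b : Bool) :
    (Finset.univ.filter fun p : Fin k × Fin m => padF m k m' k' F p.1 p.2 = some b).card =
    (Finset.univ.filter fun p : Fin k' × Fin m' => F p.1 p.2 = some b).card := by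
  symm
  apply Finset.card_bij (fun p _ => (⟨p.1, by have := p.1.2; omega⟩, ⟨p.2, by have := p.2.2; omega⟩))
  · rintro ⟨i, c⟩ h
    simpa [padF] using h
  · rintro ⟨i, c⟩ _ ⟨i', c'⟩ _ h
    simpa [Fin.ext_iff] using h
  · rintro ⟨i, c⟩ h
    rw [Finset.mem_filter] at h
    replace h := h.2
    simp only [padF] at h
    split_ifs at h with h1
    exact ⟨(⟨i, h1.1⟩, ⟨c, h1.2⟩), by simpa using h, by simp⟩

lemma pad_mem (m k m' k' : ℕ) (hm : m' ≤ m) (hk : k' ≤ k)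
    (l : Fin k' → Fin (m' + 1)) (F : Fin k' → Fin m' → Option Bool)
    (h : (l, F) ∈ SS m' k' m' k') :
    (padL m k m' k' hm l, padF m k m' k' F) ∈ SS m k m' k' := by
  simp only [mem_SS, RR, IsCCT] at h ⊢
  obtain ⟨⟨h1, h2, h3, h4⟩, h5, h6, h7, h8⟩ := h
  refine ⟨⟨?_, ?_, ?_, ?_⟩, ?_, ?_, ?_, ?_⟩
  · intro i j hij
    have hij' : (i : ℕ) ≤ j := hij
    by_cases hj : (j : ℕ) < k'
    · have hi : (i : ℕ) < k' := by omega
      simpa [padL, hi, hj] using h1 ⟨i, hi⟩ ⟨j, hj⟩ hij'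
    · simp [padL, hj]
  · intro i
    by_cases hi : (i : ℕ) < k'
    · simpa [padL, hi] using h2 ⟨i, hi⟩
    · simp [padL, hi]
  · rcases h3 with h3 | ⟨i, hi⟩
    · exact Or.inl h3
    · exact Or.inr ⟨⟨i, by have := i.2; omega⟩, by simpa [padL] using hi⟩
  · intro i
    by_cases hi : (i : ℕ) < k'
    · have := (h4 ⟨i, hi⟩).2 hi
      simp only [padL, hi, dif_pos, iff_true]
      exact this
    · simp [padL, hi]
  · intro i c hc
    by_cases hh : (i : ℕ) < k' ∧ (c : ℕ) < m'
    · simp only [padL, hh.1, dif_pos] at hc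
      simp only [padF, hh, and_self, dif_pos]
      exact h5 _ _ hc
    · simp [padF, hh]
  · intro i c c' hF hc
    by_cases hh : (i : ℕ) < k' ∧ (c : ℕ) < m'
    · have hc' : (c' : ℕ) < c := hc
      have hh' : (c' : ℕ) < m' := by omega
      simp only [padF, hh, hh', and_self, dif_pos] at hF ⊢
      exact h6 _ _ _ hF hc
    · simp [padF, hh] at hF
  · intro i i' c hF hi
    by_cases hh : (i : ℕ) < k' ∧ (c : ℕ) < m'
    · have hi' : (i' : ℕ) < i := hi
      have hh' : (i' : ℕ) < k' := by omega
      simp only [padF, hh, hh', and_self, dif_pos] at hF ⊢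
      exact h7 _ _ _ hF hi
    · simp [padF, hh] at hF
  · intro i c hc ha hb
    by_cases hi : (i : ℕ) < k'
    · simp only [padL, hi, dif_pos] at hc hb
      have h2i := h2 ⟨i, hi⟩
      have hcm : (c : ℕ) < m' := by omega
      simp only [padF, hi, hcm, and_self, dif_pos]
      apply h8 _ _ hc
      · intro i' hi'
        have := ha ⟨i', by have := i'.2; omega⟩ hi'
        simpa [padF, hcm] using this
      · intro c' hc' hcl
        have := hb ⟨c', by have := c'.2; omega⟩ hc' hcl
        simpa [padF, hi] using this
    · simp [padL, hi] at hc

lemma res_mem (m k m' k' : ℕ) (hm : m' ≤ m) (hk : k' ≤ k)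
    (l : Fin k → Fin (m + 1)) (F : Fin k → Fin m → Option Bool)
    (h : (l, F) ∈ SS m k m' k') :
    (resL m k m' k' hk l, resF m k m' k' hm hk F) ∈ SS m' k' m' k' := by
  simp only [mem_SS, RR, IsCCT] at h ⊢
  obtain ⟨⟨h1, h2, h3, h4⟩, h5, h6, h7, h8⟩ := h
  have e : ∀ i : Fin k', (resL m k m' k' hk l i : ℕ) = l ⟨i, by have := i.2; omega⟩ := by
    intro i
    simp only [resL]
    exact min_eq_left (h2 _)
  simp only [e, resF]
  refine ⟨⟨?_, ?_, ?_, ?_⟩, ?_, ?_, ?_, ?_⟩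
  · intro i j hij
    exact h1 _ _ hij
  · intro i
    exact h2 _
  · rcases h3 with h3 | ⟨i, hi⟩
    · exact Or.inl h3
    · rcases Nat.eq_zero_or_pos m' with h0 | h0
      · exact Or.inl h0
      · exact Or.inr ⟨⟨i, (h4 i).1 (by omega)⟩, hi⟩
  · intro i
    exact h4 _
  · intro i c hc
    exact h5 _ _ hc
  · intro i c c' hF hc
    exact h6 _ _ _ hF hc
  · intro i i' c hF hi
    exact h7 _ _ _ hF hi
  · intro i c hc ha hb
    apply h8 _ _ hc
    · intro i' hi'
      by_cases hk' : (i' : ℕ) < k'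
      · exact ha ⟨i', hk'⟩ hi'
      · have h9 := h4 i'
        rw [h5 i' _ (by simp only; omega)]
        simp
    · intro c' hc' hcl
      have h9 := h2 ⟨i, by have := i.2; omega⟩
      exact hb ⟨c', by omega⟩ hc' hcl

lemma fiber_eq (m k m' k' : ℕ) (hm : m' ≤ m) (hk : k' ≤ k) :
    (MvPolynomial.X 0 : MvPolynomial (Fin 2) ℤ) ^ (k - k') *
            MvPolynomial.X 1 ^ (m - m') * N'tab m' k' =
    ∑ pr ∈ SS m k m' k',
    (MvPolynomial.X 0 : MvPolynomial (Fin 2) ℤ) ^ (k + aCount k m pr.2) *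
        MvPolynomial.X 1 ^ (m + bCount k m pr.2) := by
  rw [N'tab_eq, Finset.mul_sum]
  apply Finset.sum_bij' (fun p _ => (padL m k m' k' hm p.1, padF m k m' k' p.2))
    (fun p _ => (resL m k m' k' hk p.1, resF m k m' k' hm hk p.2))
  · rintro ⟨l, F⟩ h
    exact pad_mem m k m' k' hm hk l F h
  · rintro ⟨l, F⟩ h
    exact res_mem m k m' k' hm hk l F h
  · rintro ⟨l, F⟩ h
    ext1
    · funext i
      have := (l i).2
      apply Fin.ext
      simp [padL, resL]
      omega
    · funext i c
      simp [padF, resF]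
  · rintro ⟨l, F⟩ h
    simp only [mem_SS, RR, IsCCT] at h
    obtain ⟨⟨h1, h2, h3, h4⟩, h5, h6, h7, h8⟩ := h
    ext1
    · funext i
      apply Fin.ext
      have h2i := h2 i
      have h4i := h4 i
      by_cases hi : (i : ℕ) < k'
      · simp only [padL, resL, hi, dif_pos]
        exact min_eq_left h2i
      · simp only [padL, hi, dif_neg, not_false_eq_true]
        omega
    · funext i c
      have h2i := h2 i
      have h4i := h4 i
      by_cases hh : (i : ℕ) < k' ∧ (c : ℕ) < m'
      · simp only [padF, resF, hh, and_self, dif_pos]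
      · simp only [padF, hh, dif_neg, not_false_eq_true]
        rw [h5 i c (by omega)]
  · rintro ⟨l, F⟩ h
    have ea : aCount k m (padF m k m' k' F) = aCount k' m' F := card_pad m k m' k' hm hk F true
    have eb : bCount k m (padF m k m' k' F) = bCount k' m' F := card_pad m k m' k' hm hk F false
    simp only [ea, eb]
    have e1 : k + aCount k' m' F = (k - k') + (k' + aCount k' m' F) := by omega
    have e2 : m + bCount k' m' F = (m - m') + (m' + bCount k' m' F) := by omega
    rw [e1, e2, pow_add _ (k - k'), pow_add _ (m - m')]
    ring

def MM (k : ℕ) (lam : Fin k → ℕ) : ℕ := Finset.univ.sup lam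
def KK (k : ℕ) (lam : Fin k → ℕ) : ℕ :=
  Finset.univ.sup (fun i : Fin k => if 1 ≤ lam i then (i : ℕ) + 1 else 0)

lemma KK_spec (k : ℕ) (lam : Fin k → ℕ) (h : ∀ i j : Fin k, i ≤ j → lam j ≤ lam i) (i : Fin k) :
    1 ≤ lam i ↔ (i : ℕ) < KK k lam := by
  unfold KK
  rw [Finset.lt_sup_iff]
  constructor
  · intro hi
    exact ⟨i, Finset.mem_univ _, by simp [hi]⟩
  · rintro ⟨j, -, hj⟩
    split_ifs at hj with h1
    · have := h i j (by rw [Fin.le_def]; omega)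
      omega
    · omega

lemma KK_le (k : ℕ) (lam : Fin k → ℕ) : KK k lam ≤ k := by
  unfold KK
  apply Finset.sup_le
  intro i _
  have := i.2
  split_ifs <;> omega

lemma MM_spec (k : ℕ) (lam : Fin k → ℕ) (m' : ℕ) :
    ((∀ i, lam i ≤ m') ∧ (m' = 0 ∨ ∃ i, lam i = m')) ↔ MM k lam = m' := by
  unfold MM
  constructor
  · rintro ⟨h1, h2⟩
    apply le_antisymm (Finset.sup_le fun i _ => h1 i)
    rcases h2 with rfl | ⟨i, rfl⟩
    · exact Nat.zero_le _
    · exact Finset.le_sup (f := lam) (Finset.mem_univ i)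
  · rintro rfl
    refine ⟨fun i => Finset.le_sup (f := lam) (Finset.mem_univ i), ?_⟩
    rcases (Finset.univ : Finset (Fin k)).eq_empty_or_nonempty with h | h
    · left; rw [h]; simp
    · right
      obtain ⟨i, -, hi⟩ := Finset.exists_mem_eq_sup _ h lam
      exact ⟨i, hi.symm⟩

lemma RR_iff (k m' k' : ℕ) (hk : k' ≤ k) (lam : Fin k → ℕ) :
    RR k m' k' lam ↔ (∀ i j : Fin k, i ≤ j → lam j ≤ lam i) ∧ MM k lam = m' ∧ KK k lam = k' := by
  unfold RR
  rw [← MM_spec, and_assoc]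
  refine and_congr_right fun h => and_congr_right fun _ => and_congr_right fun _ => ?_
  constructor
  · intro h2
    have h3 := KK_le k lam
    rcases lt_trichotomy (KK k lam) k' with h4 | h4 | h4
    · have a := h2 ⟨KK k lam, by omega⟩
      have b := KK_spec k lam h ⟨KK k lam, by omega⟩
      simp only at a b
      omega
    · exact h4
    · have a := h2 ⟨k', by omega⟩
      have b := KK_spec k lam h ⟨k', by omega⟩
      simp only at a b
      omega
  · rintro rfl i
    exact KK_spec k lam h i

/-- `N_{m,k}(α,β) = Σ_{m'=0}^m Σ_{k'=0}^k α^(k-k') β^(m-m') N'_{m',k'}(α,β)`. -/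
theorem stmt11 (m k : ℕ) :
    Ntab m k
      = ∑ m' ∈ Finset.range (m + 1), ∑ k' ∈ Finset.range (k + 1),
          (MvPolynomial.X 0 : MvPolynomial (Fin 2) ℤ) ^ (k - k') *
            MvPolynomial.X 1 ^ (m - m') * N'tab m' k' := by
  unfold Ntab
  rw [← Finset.sum_fiberwise_of_maps_to
    (g := fun pr : (Fin k → Fin (m + 1)) × (Fin k → Fin m → Option Bool) =>
      (MM k (fun i => (pr.1 i : ℕ)), KK k (fun i => (pr.1 i : ℕ))))
    (t := Finset.range (m + 1) ×ˢ Finset.range (k + 1))]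
  · rw [Finset.sum_product]
    refine Finset.sum_congr rfl fun m' hm => Finset.sum_congr rfl fun k' hk => ?_
    rw [Finset.mem_range] at hm hk
    rw [fiber_eq m k m' k' (by omega) (by omega)]
    refine Finset.sum_congr ?_ fun _ _ => rfl
    ext pr
    simp only [SS, Finset.mem_filter, Finset.mem_univ, true_and,
      RR_iff k m' k' (by omega : k' ≤ k), Prod.mk.injEq]
    tauto
  · intro pr _
    have h1 := KK_le k (fun i => (pr.1 i : ℕ))
    have h2 : MM k (fun i => (pr.1 i : ℕ)) ≤ m :=
      Finset.sup_le fun i _ => by have := (pr.1 i).2; omega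
    simp only [Finset.mem_product, Finset.mem_range]
    omega
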